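/- Let G be a graph, let (U, E) be a 3-fat model of the (154 × 154)-grid in G, let W ⊆ V(G) consist of exactly one vertex from each branch set corresponding to a vertex of the 77-th row of the grid, and let {A, B} be a separation of G with |W ∩ A| ≥ 32 and |W ∩ B| ≥ 32. Then A ∩ B contains a set of 32 vertices that is 3-fat 16-path-connected in G. -/

import Mathlib

open SimpleGraph

namespace CGT

/-- Distance between two vertex sets, as an extended natural number. -/
noncomputable def sDist {V : Type*} (G : SimpleGraph V) (U U' : Set V) : ℕ∞ :=
  ⨅ (u : U) (v : U'), G.edist u.1 v.1

/-- The ball of radius `r` around a vertex set `U`. -/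
def gBall {V : Type*} (G : SimpleGraph V) (U : Set V) (r : ℕ) : Set V :=
  {v | ∃ u ∈ U, G.edist u v ≤ (r : ℕ∞)}

/-- A set of vertices is connected if the induced subgraph is connected. -/
def SetConn {V : Type*} (G : SimpleGraph V) (U : Set V) : Prop :=
  (G.induce U).Connected

/-- The vertex set of a walk. -/
def walkSupp {V : Type*} {G : SimpleGraph V} {a b : V} (p : G.Walk a b) : Set V :=
  {v | v ∈ p.support}

/-- `X` separates `Y` and `Z` in `G`: every path with one end in `Y` and one in `Z`
contains a vertex of `X`. -/
def Separates {V : Type*} (G : SimpleGraph V) (X Y Z : Set V) : Prop :=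
  ∀ ⦃y z : V⦄, y ∈ Y → z ∈ Z → ∀ p : G.Walk y z, p.IsPath → ∃ x ∈ X, x ∈ p.support

/-- `f` is an `(M,A)`-quasi-isometry from `G` to `H`.  The two-sided distance bound
`M⁻¹ d_G(u,v) - A ≤ d_H(f u, f v) ≤ M d_G(u,v) + A` is stated multiplied out over `ℕ∞`. -/
structure IsQI {V V' : Type*} (M A : ℕ) (G : SimpleGraph V) (H : SimpleGraph V')
    (f : V → V') : Prop where
  upper : ∀ u v : V, H.edist (f u) (f v) ≤ (M : ℕ∞) * G.edist u v + (A : ℕ∞)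
  lower : ∀ u v : V, G.edist u v ≤ (M : ℕ∞) * H.edist (f u) (f v) + (M : ℕ∞) * (A : ℕ∞)
  dense : ∀ w : V', ∃ v : V, H.edist w (f v) ≤ (A : ℕ∞)

/-- `G` is `(M,A)`-quasi-isometric to `H`. -/
def QIsometric {V V' : Type*} (M A : ℕ) (G : SimpleGraph V) (H : SimpleGraph V') : Prop :=
  ∃ f : V → V', IsQI M A G H f

/-- `X` is a minor of `G`. -/
def HasMinor {V W : Type*} (G : SimpleGraph V) (X : SimpleGraph W) : Prop :=
  ∃ U : W → Set V,
    (∀ x, (U x).Nonempty) ∧ (∀ x, SetConn G (U x)) ∧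
    (∀ ⦃x y⦄, x ≠ y → Disjoint (U x) (U y)) ∧
    ∀ ⦃x y⦄, X.Adj x y → ∃ u ∈ U x, ∃ v ∈ U y, G.Adj u v

/-- The `(a × b)`-grid graph. -/
def gridGraph (a b : ℕ) : SimpleGraph (Fin a × Fin b) :=
  SimpleGraph.fromRel (fun u v =>
    (u.1 = v.1 ∧ u.2.1 + 1 = v.2.1) ∨ (u.2 = v.2 ∧ u.1.1 + 1 = v.1.1))

/-- A `K`-fat model of `X` in `G`: disjoint connected branch sets joined by internally
disjoint branch paths, all pairwise at distance at least `K` except for a branch path and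
the branch sets of its endpoints. -/
structure FatModel {V W : Type*} (G : SimpleGraph V) (X : SimpleGraph W) (K : ℕ) where
  branch : W → Set V
  branch_nonempty : ∀ x, (branch x).Nonempty
  branch_connected : ∀ x, SetConn G (branch x)
  branch_disjoint : ∀ ⦃x y⦄, x ≠ y → Disjoint (branch x) (branch y)
  pathEnd : ∀ ⦃x y⦄, X.Adj x y → V
  path : ∀ ⦃x y⦄ (e : X.Adj x y), G.Walk (pathEnd e) (pathEnd e.symm)
  path_isPath : ∀ ⦃x y⦄ (e : X.Adj x y), (path e).IsPath
  path_symm : ∀ ⦃x y⦄ (e : X.Adj x y), path e.symm = (path e).reverse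
  pathEnd_mem : ∀ ⦃x y⦄ (e : X.Adj x y), pathEnd e ∈ branch x
  path_meets : ∀ ⦃x y⦄ (e : X.Adj x y) (z : W) (v : V), v ∈ (path e).support → v ∈ branch z →
    (z = x ∧ v = pathEnd e) ∨ (z = y ∧ v = pathEnd e.symm)
  path_int_disjoint : ∀ ⦃x y x' y'⦄ (e : X.Adj x y) (e' : X.Adj x' y'), s(x, y) ≠ s(x', y') →
    ∀ v, v ∈ (path e).support → v ∈ (path e').support → v = pathEnd e' ∨ v = pathEnd e'.symm
  fat_branch : ∀ ⦃x y⦄, x ≠ y → (K : ℕ∞) ≤ sDist G (branch x) (branch y)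
  fat_path_branch : ∀ ⦃x y⦄ (e : X.Adj x y) (z : W), z ≠ x → z ≠ y →
    (K : ℕ∞) ≤ sDist G (walkSupp (path e)) (branch z)
  fat_paths : ∀ ⦃x y x' y'⦄ (e : X.Adj x y) (e' : X.Adj x' y'), s(x, y) ≠ s(x', y') →
    (K : ℕ∞) ≤ sDist G (walkSupp (path e)) (walkSupp (path e'))

/-- `X` is a `K`-fat minor of `G`. -/
def IsFatMinor {V W : Type*} (G : SimpleGraph V) (X : SimpleGraph W) (K : ℕ) : Prop :=
  Nonempty (FatModel G X K)

/-- `W` is a `K`-fat `n`-path-connected set in `G`. -/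
def FatPathConn {V : Type*} (G : SimpleGraph V) (K n : ℕ) (W : Set V) : Prop :=
  (∃ S : Finset V, ↑S ⊆ W ∧ 2 * n ≤ S.card) ∧
  (∀ ⦃u v : V⦄, u ∈ W → v ∈ W → u ≠ v → (K : ℕ∞) ≤ G.edist u v) ∧
  ∀ l : ℕ, l ≤ n → ∀ A B : Finset V, ↑A ⊆ W → ↑B ⊆ W → A.card = l → B.card = l →
    ∃ (a b : Fin l → V) (P : ∀ i : Fin l, G.Walk (a i) (b i)),
      (∀ i, (P i).IsPath) ∧ (∀ i, a i ∈ A ∧ b i ∈ B) ∧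
      ∀ i j, i ≠ j → (K : ℕ∞) ≤ sDist G (walkSupp (P i)) (walkSupp (P j))

end CGT

namespace Ghdm

/-- Raw vertex codes for the graphs `G_{h,d,m}`:
`path k` is the `k`-th vertex of the base path; `tree j i p` is the vertex at position `p`
of the `i`-th binary tree at level `j` (the root being position `[]`); and
`spine j i k t e s` is the `s`-th internal vertex of the spine from the `k`-th leaf of that
tree to the `e`-th element of the `t`-th local gluing set at level `j-1`. -/
inductive Raw : Type where
  | path (k : ℕ)
  | tree (j i : ℕ) (p : List Bool)
  | spine (j i k t e s : ℕ)
deriving DecidableEq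

/-- `N = 2^{h+1} - 1`, the number of copies of `G_{h,d,m-1}` glued inside `G_{h,d,m}`. -/
def NN (h : ℕ) : ℕ := 2 ^ (h + 1) - 1

/-- Canonical representative of a raw vertex code: all tree roots are identified with the
single root `tree m 1 []`, and the leftmost leaf of tree `i > 1` is identified with the
rightmost leaf of tree `i - 1` (consecutive copies are glued along these leaves). -/
def canon (h m : ℕ) : Raw → Raw
  | .tree j i p =>
    if p = [] then .tree m 1 []
    else if p = List.replicate h false ∧ 1 < i then .tree j (i - 1) (List.replicate h true)
    else .tree j i p
  | x => x

/-- The `q`-bit binary representation of `i` (most significant bit first);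
`false` means "left". -/
def natToBits (q i : ℕ) : List Bool := (List.range q).map fun a => Nat.testBit i (q - 1 - a)

/-- Position of the `k`-th leaf (1-based, from the left) in a binary tree of height `h`. -/
def leafPos (h k : ℕ) : List Bool := natToBits h (k - 1)

/-- The `e`-th element of the `g`-th gluing set `V^{jv}_g` (at level `jv`):
its element `e = 1` is an anchor of the base path, and its element `e ≥ 2` is a shared
extreme leaf of the trees at level `e`. -/
def VsetElem (h d jv g e : ℕ) : Raw :=
  if e = 1 then .path ((g - 1) * NN h ^ (jv - 1) * (d + 1))
  else if (g - 1) * NN h ^ (jv - e) = 0 then .tree e 1 (List.replicate h false)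
  else .tree e ((g - 1) * NN h ^ (jv - e)) (List.replicate h true)

/-- Valid (canonical) vertex codes of `G_{h,d,m}`. -/
def Valid (h d m : ℕ) : Raw → Prop
  | .path k => k ≤ (d + 1) * NN h ^ (m - 1)
  | .tree j i p => 2 ≤ j ∧ j ≤ m ∧ 1 ≤ i ∧ i ≤ NN h ^ (m - j) ∧ p.length ≤ h ∧
      (p = [] → j = m ∧ i = 1) ∧ (p = List.replicate h false → p ≠ [] → i = 1)
  | .spine j i k t e s => 2 ≤ j ∧ j ≤ m ∧ 1 ≤ i ∧ i ≤ NN h ^ (m - j) ∧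
      1 ≤ k ∧ k ≤ 2 ^ h ∧ (t = 2 * k - 2 ∨ t = 2 * k + 1) ∧ 1 ≤ t ∧ t ≤ 2 ^ (h + 1) ∧
      1 ≤ e ∧ e ≤ j - 1 ∧ 1 ≤ s ∧ s ≤ d

/-- Generating adjacencies between raw vertex codes: consecutive base path vertices,
parent/child in the binary trees, consecutive spine vertices, a spine and the leaf it
starts at, a spine and the gluing-set vertex it ends at (the latter collapsed to a single
edge when `d = 0`). -/
inductive rawAdj (h d : ℕ) : Raw → Raw → Prop
  | base (k : ℕ) : rawAdj h d (.path k) (.path (k + 1))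
  | child (j i : ℕ) (p : List Bool) (b : Bool) : p.length < h →
      rawAdj h d (.tree j i p) (.tree j i (p ++ [b]))
  | step (j i k t e s : ℕ) : rawAdj h d (.spine j i k t e s) (.spine j i k t e (s + 1))
  | toLeaf (j i k t e : ℕ) : rawAdj h d (.tree j i (leafPos h k)) (.spine j i k t e 1)
  | toV (j i k t e : ℕ) :
      rawAdj h d (.spine j i k t e d) (VsetElem h d (j - 1) ((i - 1) * NN h + t) e)
  | short (j i k t e : ℕ) : d = 0 → 1 ≤ k → k ≤ 2 ^ h → (t = 2 * k - 2 ∨ t = 2 * k + 1) →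
      1 ≤ t → t ≤ 2 ^ (h + 1) → 1 ≤ e → e ≤ j - 1 →
      rawAdj h d (.tree j i (leafPos h k)) (VsetElem h d (j - 1) ((i - 1) * NN h + t) e)

/-- Adjacency of canonical representatives. -/
def rel (h d m : ℕ) (x y : Raw) : Prop :=
  ∃ a b, rawAdj h d a b ∧ x = canon h m a ∧ y = canon h m b

/-- The vertex set of `G_{h,d,m}`. -/
def Verts (h d m : ℕ) : Set Raw := {x | Valid h d m x}

/-- The graph `G_{h,d,m}`. -/
def G (h d m : ℕ) : SimpleGraph (Verts h d m) :=
  (SimpleGraph.fromRel (rel h d m)).induce (Verts h d m)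

/-- Lift a set of raw codes to a set of vertices of `G_{h,d,m}`. -/
def lift {h d m : ℕ} (S : Set Raw) : Set (Verts h d m) := Subtype.val ⁻¹' S

/-- The root `R(G_{h,d,m})`. -/
def RootR (m : ℕ) : Raw := .tree m 1 []

/-- The gluing set `V^{jv}_g` of `G_{h,d,m}`, as a set of raw codes. -/
def VsetRaw (h d m jv g : ℕ) : Set Raw :=
  {x | ∃ e, 1 ≤ e ∧ e ≤ jv ∧ x = canon h m (VsetElem h d jv g e)}

/-- The set `S(G_{h,d,m})`. -/
def SsetR (h d m : ℕ) : Set Raw :=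
  VsetRaw h d m (m - 1) 1 ∪ {canon h m (.tree m 1 (leafPos h 1))}

/-- The set `T(G_{h,d,m})`. -/
def TsetR (h d m : ℕ) : Set Raw :=
  VsetRaw h d m (m - 1) (2 ^ (h + 1)) ∪ {canon h m (.tree m 1 (leafPos h (2 ^ h)))}

/-- For a vertex of the top binary tree at position `p`, the (1-based) index of the
leftmost leaf of the top tree below it. -/
def kOf (h : ℕ) (p : List Bool) : ℕ :=
  (p.foldl (fun a b => 2 * a + if b then 1 else 0) 0) * 2 ^ (h - p.length) + 1

/-- `S(Δ(x))` for the vertex `x` of the top binary tree `B(G_{h,d,m})` at position `p`. -/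
def SDeltaR (h d m : ℕ) (p : List Bool) : Set Raw :=
  VsetRaw h d m (m - 1) (2 * kOf h p - 1) ∪ {canon h m (.tree m 1 (leafPos h (kOf h p)))}

/-- The leaf of `B(G_{h,d,m})` immediately to the left of the leftmost leaf below the
top-tree vertex at position `p`; it is the unique leaf joined by spines to `S(Δ(x))`. -/
def leafLeftR (h m : ℕ) (p : List Bool) : Raw :=
  canon h m (.tree m 1 (leafPos h (kOf h p - 1)))

end Ghdm

/-!
Match `N` columns `x i` whose row-`r` representatives lie in `A` with `N` columns `y i` whose
representatives lie in `B`, always taking next a pair that spans an inclusion-minimal interval.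
Arcs of increasing height above row `r` through the matched pairs are then disjoint, so in `G` they
become connected sets at distance at least `K`. Each of them runs from `A` to `B` and hence contains
a vertex of `A ∩ B`. To link two `ℓ`-subsets of these `N` vertices, match the corresponding columns
`x i` in the same way and join the matched arcs by disjoint arcs below row `r`.
-/

namespace CGT

section Distance

variable {V ι : Type*} {G : SimpleGraph V} {U U' : Set V}

theorem le_sDist_iff {k : ℕ∞} : k ≤ sDist G U U' ↔ ∀ u ∈ U, ∀ v ∈ U', k ≤ G.edist u v := by
  simp only [sDist, le_iInf_iff, Subtype.forall]

theorem sDist_anti {T T' : Set V} (hU : U ⊆ T) (hU' : U' ⊆ T') : sDist G T T' ≤ sDist G U U' :=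
  le_sDist_iff.2 fun u hu v hv => le_sDist_iff.1 le_rfl u (hU hu) v (hU' hv)

theorem injective_of_pairwise_le_edist {K : ℕ} {p : ι → V} (hK : 0 < K)
    (hp : Pairwise fun i j => (K : ℕ∞) ≤ G.edist (p i) (p j)) : Function.Injective p := by
  intro i j hij
  by_contra hne
  have hle : (K : ℕ∞) ≤ G.edist (p i) (p j) := hp hne
  rw [hij, edist_self, nonpos_iff_eq_zero, Nat.cast_eq_zero] at hle
  exact hK.ne' hle

end Distance

section Connected

variable {V : Type*} {G : SimpleGraph V} {U U' F : Set V} {u v : V}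

theorem SetConn.union (hU : SetConn G U) (hU' : SetConn G U') (h : (U ∩ U').Nonempty) :
    SetConn G (U ∪ U') :=
  induce_union_connected hU.preconnected hU'.preconnected h

theorem SetConn.reachable_induce (hU : SetConn G U) (hUF : U ⊆ F) (hu : u ∈ U) (hv : v ∈ U) :
    (G.induce F).Reachable ⟨u, hUF hu⟩ ⟨v, hUF hv⟩ :=
  (hU.preconnected ⟨u, hu⟩ ⟨v, hv⟩).map (induceHomOfLE G hUF).toHom

theorem SetConn.exists_isPath (hU : SetConn G U) (hu : u ∈ U) (hv : v ∈ U) :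
    ∃ p : G.Walk u v, p.IsPath ∧ walkSupp p ⊆ U := by
  classical
  obtain ⟨q⟩ := hU.preconnected ⟨u, hu⟩ ⟨v, hv⟩
  let q' : G.Walk u v := q.map (Embedding.induce (G := G) U).toHom
  refine ⟨q'.bypass, q'.bypass_isPath, fun z hz => ?_⟩
  have hz' : z ∈ q'.support := q'.support_bypass_subset_support hz
  obtain ⟨z', -, rfl⟩ := List.mem_map.1 (q.support_map _ ▸ hz')
  exact z'.2

theorem SetConn.inter_separator_nonempty {A B : Set V} (hU : SetConn G U)
    (hAB : A ∪ B = Set.univ) (hsep : ∀ a ∈ A \ B, ∀ b ∈ B \ A, ¬ G.Adj a b)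
    (hu : u ∈ U) (huA : u ∈ A) (hv : v ∈ U) (hvB : v ∈ B) : (U ∩ (A ∩ B)).Nonempty := by
  by_cases hvA : v ∈ A
  · exact ⟨v, hv, hvA, hvB⟩
  obtain ⟨q⟩ := hU.preconnected ⟨u, hu⟩ ⟨v, hv⟩
  obtain ⟨d, -, hfst, hsnd⟩ := q.exists_boundary_dart (Subtype.val ⁻¹' A) huA hvA
  have hsndB : d.snd.1 ∈ B := (hAB ▸ Set.mem_univ d.snd.1 : d.snd.1 ∈ A ∪ B).resolve_left hsnd
  have hfstB : d.fst.1 ∈ B := by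
    by_contra hfstB
    exact hsep _ ⟨hfst, hfstB⟩ _ ⟨hsndB, hsnd⟩ d.adj
  exact ⟨d.fst, d.fst.2, hfst, hfstB⟩

theorem setConn_image_of_ordConnected {α : Type*} [LinearOrder α] [SuccOrder α]
    [IsSuccArchimedean α] {f : α → V} (hf : ∀ ⦃x y⦄, x ⋖ y → G.Adj (f x) (f y))
    {s : Set α} [hs : s.OrdConnected] (hne : s.Nonempty) : SetConn G (f '' s) := by
  have hcov : ∀ x y : s, x ⋖ y → G.Adj (f x) (f y) := fun x y hxy =>
    hf ((Set.OrdConnected.apply_covBy_apply_iff (OrderEmbedding.subtype (· ∈ s))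
      (by simpa using hs)).2 hxy)
  let φ : hasse s →g G.induce (f '' s) :=
    { toFun := fun x => ⟨f x, x, x.2, rfl⟩
      map_rel' := fun {x y} hxy => hxy.elim (hcov x y) fun hyx => (hcov y x hyx).symm }
  have hφ : Function.Surjective φ := by
    rintro ⟨_, x, hx, rfl⟩
    exact ⟨⟨x, hx⟩, rfl⟩
  have := hne.to_subtype
  exact Connected.map φ hφ ⟨hasse_preconnected_of_succ s⟩

end Connected

namespace FatModel

variable {V W : Type*} {G : SimpleGraph V} {X : SimpleGraph W} {K : ℕ} (M : FatModel G X K)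
  {S T : Set W}

/-- The part of `G` modelling the subgraph of `X` induced on `S`: all branch sets of vertices
of `S` together with all branch paths of edges with both ends in `S`. -/
def carrier (S : Set W) : Set V :=
  {u | (∃ x ∈ S, u ∈ M.branch x) ∨ ∃ x ∈ S, ∃ y ∈ S, ∃ e : X.Adj x y, u ∈ walkSupp (M.path e)}

variable {M}

theorem branch_subset_carrier {x : W} (hx : x ∈ S) : M.branch x ⊆ M.carrier S :=
  fun _ hu => Or.inl ⟨x, hx, hu⟩

theorem walkSupp_path_subset_carrier {x y : W} (e : X.Adj x y) (hx : x ∈ S) (hy : y ∈ S) :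
    walkSupp (M.path e) ⊆ M.carrier S :=
  fun _ hu => Or.inr ⟨x, hx, y, hy, e, hu⟩

theorem carrier_mono (h : S ⊆ T) : M.carrier S ⊆ M.carrier T := by
  rintro u (⟨x, hx, hu⟩ | ⟨x, hx, y, hy, e, hu⟩)
  · exact branch_subset_carrier (h hx) hu
  · exact walkSupp_path_subset_carrier e (h hx) (h hy) hu

theorem le_sDist_carrier (h : Disjoint S T) :
    (K : ℕ∞) ≤ sDist G (M.carrier S) (M.carrier T) := by
  refine le_sDist_iff.2 fun u hu v hv => ?_
  rcases hu with ⟨x, hx, hu⟩ | ⟨x, hx, y, hy, e, hu⟩ <;>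
    rcases hv with ⟨x', hx', hv⟩ | ⟨x', hx', y', hy', e', hv⟩
  · exact le_sDist_iff.1 (M.fat_branch (h.ne_of_mem hx hx')) u hu v hv
  · rw [edist_comm]
    exact le_sDist_iff.1
      (M.fat_path_branch e' x (h.ne_of_mem hx hx') (h.ne_of_mem hx hy')) v hv u hu
  · exact le_sDist_iff.1
      (M.fat_path_branch e x' (h.ne_of_mem hx hx').symm (h.ne_of_mem hy hx').symm) u hu v hv
  · have hne : s(x, y) ≠ s(x', y') := fun hs => by
      rcases Sym2.eq_iff.1 hs with ⟨hxx', -⟩ | ⟨hxy', -⟩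
      · exact h.ne_of_mem hx hx' hxx'
      · exact h.ne_of_mem hx hy' hxy'
    exact le_sDist_iff.1 (M.fat_paths e e' hne) u hu v hv

theorem setConn_branch_union_path {x y : W} (e : X.Adj x y) :
    SetConn G (M.branch x ∪ walkSupp (M.path e)) :=
  (M.branch_connected x).union (M.path e).connected_induce_support
    ⟨M.pathEnd e, M.pathEnd_mem e, (M.path e).start_mem_support⟩

theorem reachable_induce_carrier {x y : S} (h : (X.induce S).Reachable x y) {u v : V}
    (hu : u ∈ M.branch x) (hv : v ∈ M.branch y) :
    (G.induce (M.carrier S)).Reachable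
      ⟨u, branch_subset_carrier x.2 hu⟩ ⟨v, branch_subset_carrier y.2 hv⟩ := by
  obtain ⟨p⟩ := h
  induction p generalizing u with
  | @nil x => exact (M.branch_connected x).reachable_induce (branch_subset_carrier x.2) hu hv
  | @cons x z y e _ ih =>
    have e' : X.Adj x z := e
    have hfirst := (setConn_branch_union_path (M := M) e').reachable_induce
      (Set.union_subset (branch_subset_carrier x.2) (walkSupp_path_subset_carrier e' x.2 z.2))
      (Or.inl hu) (Or.inr (M.path e').end_mem_support)
    exact hfirst.trans (ih (M.pathEnd_mem e'.symm) hv)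

theorem exists_branch_reachable {u : V} (hu : u ∈ M.carrier S) :
    ∃ (x : S) (v : V) (hv : v ∈ M.branch x),
      (G.induce (M.carrier S)).Reachable ⟨u, hu⟩ ⟨v, branch_subset_carrier x.2 hv⟩ := by
  rcases hu with ⟨x, hx, hux⟩ | ⟨x, hx, y, hy, e, hue⟩
  · exact ⟨⟨x, hx⟩, u, hux, Reachable.rfl⟩
  · exact ⟨⟨x, hx⟩, M.pathEnd e, M.pathEnd_mem e,
      SetConn.reachable_induce (M.path e).connected_induce_support
        (walkSupp_path_subset_carrier e hx hy) hue (M.path e).start_mem_support⟩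

theorem setConn_carrier (hS : SetConn X S) : SetConn G (M.carrier S) := by
  have hpre : (G.induce (M.carrier S)).Preconnected := by
    rintro ⟨u, hu⟩ ⟨v, hv⟩
    obtain ⟨x, u', hu', huu'⟩ := exists_branch_reachable hu
    obtain ⟨y, v', hv', hvv'⟩ := exists_branch_reachable hv
    exact huu'.trans ((reachable_induce_carrier (hS.preconnected x y) hu' hv').trans hvv'.symm)
  obtain ⟨x⟩ := hS.nonempty
  obtain ⟨u, hu⟩ := M.branch_nonempty x
  exact (connected_iff _).2 ⟨hpre, ⟨u, branch_subset_carrier x.2 hu⟩⟩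

end FatModel

section LinkedFamily

theorem pairwise_disjoint_union_union {ι κ α : Type*} {U : ι → Set α} {D : κ → Set α}
    {s t : κ → ι} (hU : Pairwise fun i j => Disjoint (U i) (U j))
    (hD : Pairwise fun k m => Disjoint (D k) (D m))
    (hst : Pairwise fun k m => Disjoint ({s k, t k} : Set ι) {s m, t m})
    (hUD : ∀ i k, i ∉ ({s k, t k} : Set ι) → Disjoint (U i) (D k)) :
    Pairwise fun k m => Disjoint (U (s k) ∪ D k ∪ U (t k)) (U (s m) ∪ D m ∪ U (t m)) := by
  intro k m hkm
  have hends : ∀ i ∈ ({s k, t k} : Set ι), ∀ j ∈ ({s m, t m} : Set ι), Disjoint (U i) (U j) :=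
    fun i hi j hj => hU ((hst hkm).ne_of_mem hi hj)
  have hleft : ∀ i ∈ ({s k, t k} : Set ι), Disjoint (U i) (D m) := fun i hi =>
    hUD i m (Set.disjoint_left.1 (hst hkm) hi)
  have hright : ∀ j ∈ ({s m, t m} : Set ι), Disjoint (D k) (U j) := fun j hj =>
    (hUD j k (Set.disjoint_right.1 (hst hkm) hj)).symm
  have hDkm : Disjoint (D k) (D m) := hD hkm
  simp only [Set.mem_insert_iff, Set.mem_singleton_iff, forall_eq_or_imp, forall_eq]
    at hends hleft hright
  simp only [Set.disjoint_union_left, Set.disjoint_union_right]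
  tauto

variable {V W ι : Type*} {G : SimpleGraph V} {X : SimpleGraph W} {K n : ℕ} {U : ι → Set W}

/-- A family of disjoint connected vertex sets of `X` in which any two subfamilies of the same
size at most `n` can be linked by disjoint connected sets `Z k`, each containing a member of
either subfamily. It is the analogue of `FatPathConn` in the modelled graph `X`, with connected
sets in place of vertices and paths. -/
structure LinkedFamily (X : SimpleGraph W) (n : ℕ) (U : ι → Set W) : Prop where
  connected : ∀ i, SetConn X (U i)
  disjoint : Pairwise fun i j => Disjoint (U i) (U j)
  linked : ∀ l ≤ n, ∀ I J : Finset ι, I.card = l → J.card = l →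
    ∃ (s t : Fin l → ι) (Z : Fin l → Set W), (∀ k, s k ∈ I ∧ t k ∈ J) ∧
      (∀ k, SetConn X (Z k)) ∧ (∀ k, U (s k) ∪ U (t k) ⊆ Z k) ∧
      Pairwise fun k m => Disjoint (Z k) (Z m)

variable {M : FatModel G X K} {p : ι → V}

theorem LinkedFamily.pairwise_le_edist (hU : LinkedFamily X n U)
    (hp : ∀ i, p i ∈ M.carrier (U i)) : Pairwise fun i j => (K : ℕ∞) ≤ G.edist (p i) (p j) :=
  fun i j hij =>
    le_sDist_iff.1 (FatModel.le_sDist_carrier (hU.disjoint hij)) (p i) (hp i) (p j) (hp j)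

theorem LinkedFamily.exists_fat_paths (hU : LinkedFamily X n U)
    (hp : ∀ i, p i ∈ M.carrier (U i)) {l : ℕ} (hl : l ≤ n) {I J : Finset ι}
    (hI : I.card = l) (hJ : J.card = l) :
    ∃ (s t : Fin l → ι) (P : ∀ k, G.Walk (p (s k)) (p (t k))), (∀ k, (P k).IsPath) ∧
      (∀ k, s k ∈ I ∧ t k ∈ J) ∧
      ∀ k m, k ≠ m → (K : ℕ∞) ≤ sDist G (walkSupp (P k)) (walkSupp (P m)) := by
  obtain ⟨s, t, Z, hst, hZ, hUZ, hdisj⟩ := hU.linked l hl I J hI hJ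
  have hs : ∀ k, p (s k) ∈ M.carrier (Z k) := fun k =>
    FatModel.carrier_mono (Set.union_subset_iff.1 (hUZ k)).1 (hp (s k))
  have ht : ∀ k, p (t k) ∈ M.carrier (Z k) := fun k =>
    FatModel.carrier_mono (Set.union_subset_iff.1 (hUZ k)).2 (hp (t k))
  choose P hPpath hPZ using fun k =>
    (FatModel.setConn_carrier (hZ k)).exists_isPath (hs k) (ht k)
  exact ⟨s, t, P, hPpath, hst, fun k m hkm =>
    (FatModel.le_sDist_carrier (hdisj hkm)).trans (sDist_anti (hPZ k) (hPZ m))⟩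

theorem LinkedFamily.fatPathConn_range [Fintype ι] (hU : LinkedFamily X n U)
    (hp : ∀ i, p i ∈ M.carrier (U i)) (hK : 0 < K) (hn : 2 * n ≤ Fintype.card ι) :
    FatPathConn G K n (Set.range p) := by
  classical
  have hfat := hU.pairwise_le_edist hp
  have hinj := injective_of_pairwise_le_edist hK hfat
  have hindex : ∀ C : Finset V, ↑C ⊆ Set.range p →
      ∃ I : Finset ι, I.card = C.card ∧ ∀ i ∈ I, p i ∈ C := by
    intro C hC
    rw [← Set.image_univ, Finset.subset_set_image_iff] at hC
    obtain ⟨I, -, rfl⟩ := hC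
    exact ⟨I, (Finset.card_image_of_injective I hinj).symm, fun i => Finset.mem_image_of_mem p⟩
  refine ⟨⟨Finset.univ.image p, by simp, ?_⟩, ?_, ?_⟩
  · rwa [Finset.card_image_of_injective _ hinj, Finset.card_univ]
  · rintro _ _ ⟨i, rfl⟩ ⟨j, rfl⟩ hij
    exact hfat (ne_of_apply_ne p hij)
  · intro l hl A B hA hB hAl hBl
    obtain ⟨I, hI, hIA⟩ := hindex A hA
    obtain ⟨J, hJ, hJB⟩ := hindex B hB
    obtain ⟨s, t, P, hP, hst, hPfat⟩ :=
      hU.exists_fat_paths hp hl (hI.trans hAl) (hJ.trans hBl)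
    exact ⟨_, _, P, hP, fun k => ⟨hIA _ (hst k).1, hJB _ (hst k).2⟩, hPfat⟩

end LinkedFamily

section Nested

variable {ι κ α : Type*} [LinearOrder α]

/-- No interval spanned by a pair `s i, t i` contains an endpoint of a later pair. Thus any two
of these intervals are disjoint or nested, the inner one having the smaller index. -/
def IsNested [LT κ] (s t : κ → α) : Prop :=
  ∀ ⦃i j⦄, i < j → s j ∉ Set.uIcc (s i) (t i) ∧ t j ∉ Set.uIcc (s i) (t i)

theorem IsNested.pairwise_disjoint [LinearOrder κ] {s t : κ → α} (h : IsNested s t) :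
    Pairwise fun i j => Disjoint ({s i, t i} : Set α) {s j, t j} := by
  refine (pairwise_disjoint_on fun i => ({s i, t i} : Set α)).2 fun i j hij => ?_
  have hsub : ({s i, t i} : Set α) ⊆ Set.uIcc (s i) (t i) :=
    Set.pair_subset Set.left_mem_uIcc Set.right_mem_uIcc
  refine Set.disjoint_left.2 fun c hc => ?_
  rintro (rfl | rfl)
  · exact (h hij).1 (hsub hc)
  · exact (h hij).2 (hsub hc)

theorem IsNested.injective_left [LinearOrder κ] {s t : κ → α} (h : IsNested s t) :
    Function.Injective s := by
  intro i j hij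
  by_contra hne
  exact Set.disjoint_left.1 (h.pairwise_disjoint hne) (Set.mem_insert _ _) (by simp [hij])

theorem IsNested.disjoint_pair_of_notMem [LinearOrder κ] {s t : κ → α} (h : IsNested s t)
    {i j k : κ} (hi : i ∉ ({j, k} : Set κ)) : Disjoint ({s i, t i} : Set α) {s j, s k} := by
  rw [Set.mem_insert_iff, Set.mem_singleton_iff, not_or] at hi
  refine Set.disjoint_insert_right.2 ⟨?_, Set.disjoint_singleton_right.2 ?_⟩
  · exact Set.disjoint_right.1 (h.pairwise_disjoint hi.1) (Set.mem_insert _ _)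
  · exact Set.disjoint_right.1 (h.pairwise_disjoint hi.2) (Set.mem_insert _ _)

variable {f : ι → α}

theorem IsNested.pairwise_disjoint_of_comp [LinearOrder κ] {s t : κ → ι}
    (h : IsNested (f ∘ s) (f ∘ t)) :
    Pairwise fun i j => Disjoint ({s i, t i} : Set ι) {s j, t j} := by
  intro i j hij
  refine Disjoint.of_image (f := f) ?_
  rw [Set.image_pair, Set.image_pair]
  exact h.pairwise_disjoint hij

theorem exists_pair_forall_mem_uIcc_eq (hf : Function.Injective f) {S T : Finset ι}
    (hS : S.Nonempty) (hT : T.Nonempty) :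
    ∃ a ∈ S, ∃ b ∈ T, (∀ s ∈ S, f s ∈ Set.uIcc (f a) (f b) → s = a) ∧
      ∀ t ∈ T, f t ∈ Set.uIcc (f a) (f b) → t = b := by
  obtain ⟨⟨a, b⟩, hab, hmin⟩ := Finset.exists_minimalFor
    (fun q : ι × ι => Set.uIcc (f q.1) (f q.2)) (S ×ˢ T) (hS.product hT)
  obtain ⟨ha, hb⟩ := Finset.mem_product.1 hab
  refine ⟨a, ha, b, hb, fun s hs hsab => ?_, fun t ht htab => ?_⟩
  · have hle : Set.uIcc (f a) (f b) ⊆ Set.uIcc (f s) (f b) :=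
      hmin (j := (s, b)) (Finset.mk_mem_product hs hb) (Set.uIcc_subset_uIcc_right hsab)
    exact hf (Set.eq_of_mem_uIcc_of_mem_uIcc hsab (hle Set.left_mem_uIcc))
  · have hle : Set.uIcc (f a) (f b) ⊆ Set.uIcc (f a) (f t) :=
      hmin (j := (a, t)) (Finset.mk_mem_product ha ht) (Set.uIcc_subset_uIcc_left htab)
    exact hf (Set.eq_of_mem_uIcc_of_mem_uIcc' htab (hle Set.right_mem_uIcc))

theorem exists_isNested_matching (hf : Function.Injective f) {k : ℕ} {S T : Finset ι}
    (hS : S.card = k) (hT : T.card = k) :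
    ∃ s t : Fin k → ι, (∀ i, s i ∈ S ∧ t i ∈ T) ∧ IsNested (f ∘ s) (f ∘ t) := by
  classical
  induction k generalizing S T with
  | zero => exact ⟨Fin.elim0, Fin.elim0, fun i => i.elim0, fun i => i.elim0⟩
  | succ k ih =>
    have hSne : S.Nonempty := Finset.card_pos.1 (by lia)
    have hTne : T.Nonempty := Finset.card_pos.1 (by lia)
    obtain ⟨a, ha, b, hb, haS, hbT⟩ := exists_pair_forall_mem_uIcc_eq hf hSne hTne
    obtain ⟨s, t, hst, hnest⟩ := ih (S := S.erase a) (T := T.erase b)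
      (by rw [Finset.card_erase_of_mem ha, hS, Nat.add_sub_cancel])
      (by rw [Finset.card_erase_of_mem hb, hT, Nat.add_sub_cancel])
    simp only [Finset.mem_erase] at hst
    refine ⟨Fin.cons a s, Fin.cons b t, Fin.cases ⟨ha, hb⟩ fun i => ⟨(hst i).1.2, (hst i).2.2⟩, ?_⟩
    intro i j hij
    cases j using Fin.cases with
    | zero => exact absurd hij (Fin.not_lt_zero i)
    | succ j =>
      cases i using Fin.cases with
      | zero => exact ⟨fun h => (hst j).1.1 (haS _ (hst j).1.2 h),
          fun h => (hst j).2.1 (hbT _ (hst j).2.2 h)⟩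
      | succ i => exact hnest (Fin.succ_lt_succ_iff.1 hij)

end Nested

section Arc

variable {α β : Type*} [LinearOrder α] [LinearOrder β] {a b a' b' : α} {r t t' : β}

/-- The arc that leaves row `r` in column `a`, follows row `t`, and returns to row `r` in
column `b`. It lies above or below row `r` according to the sign of `t - r`. -/
def arc (a b : α) (r t : β) : Set (α × β) :=
  {a, b} ×ˢ Set.uIcc r t ∪ Set.uIcc a b ×ˢ {t}

theorem left_mem_arc : (a, r) ∈ arc a b r t :=
  Or.inl ⟨Set.mem_insert _ _, Set.left_mem_uIcc⟩

theorem right_mem_arc : (b, r) ∈ arc a b r t :=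
  Or.inl ⟨Set.mem_insert_of_mem _ rfl, Set.left_mem_uIcc⟩

theorem disjoint_arc_of_notMem (ha' : a' ∉ Set.uIcc a b) (hb' : b' ∉ Set.uIcc a b)
    (ht : t ∈ Set.uIcc r t') (hne : t ≠ t') : Disjoint (arc a b r t) (arc a' b' r t') := by
  have hends : ∀ c ∈ ({a', b'} : Set α), c ∉ Set.uIcc a b := by
    rintro c (rfl | rfl) <;> assumption
  have hcols : ({a, b} : Set α) ⊆ Set.uIcc a b :=
    Set.pair_subset Set.left_mem_uIcc Set.right_mem_uIcc
  refine Set.disjoint_left.2 ?_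
  rintro ⟨c, q⟩ (⟨hc, hq⟩ | ⟨hc, hq⟩) (⟨hc', -⟩ | ⟨-, hq'⟩)
  · exact hends c hc' (hcols hc)
  · obtain rfl : q = t' := hq'
    exact hne (Set.eq_of_mem_uIcc_of_mem_uIcc' ht hq)
  · exact hends c hc' hc
  · exact hne (hq.symm.trans hq')

theorem disjoint_arc_of_opposite (h : Disjoint ({a, b} : Set α) {a', b'}) (ht : r < t)
    (ht' : t' < r) : Disjoint (arc a b r t) (arc a' b' r t') := by
  refine Set.disjoint_left.2 ?_
  rw [arc, arc, Set.uIcc_of_le ht.le, Set.uIcc_of_ge ht'.le]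
  rintro ⟨c, q⟩ (⟨hc, hq⟩ | ⟨-, hq⟩) (⟨hc', hq'⟩ | ⟨-, hq'⟩)
  · exact Set.disjoint_left.1 h hc hc'
  · exact (ht'.trans_le hq.1).ne' hq'
  · exact (hq'.2.trans_lt ht).ne hq
  · exact (ht'.trans ht).ne (hq'.symm.trans hq)

theorem IsNested.pairwise_disjoint_arc {κ : Type*} [LinearOrder κ] {s t : κ → α}
    (hst : IsNested s t) {h : κ → β} (hh : ∀ ⦃i j⦄, i < j → h i ∈ Set.uIcc r (h j))
    (hinj : Function.Injective h) :
    Pairwise fun i j => Disjoint (arc (s i) (t i) r (h i)) (arc (s j) (t j) r (h j)) :=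
  (pairwise_disjoint_on fun i => arc (s i) (t i) r (h i)).2 fun _ _ hij =>
    disjoint_arc_of_notMem (hst hij).1 (hst hij).2 (hh hij) (hinj.ne hij.ne)

end Arc

section Grid

variable {m₁ m₂ : ℕ}

theorem gridGraph_adj_of_covBy_fst {x y : Fin m₁} (hxy : x ⋖ y) (q : Fin m₂) :
    (gridGraph m₁ m₂).Adj (x, q) (y, q) :=
  (fromRel_adj _ _ _).2 ⟨fun h => hxy.ne (congrArg Prod.fst h),
    Or.inl (Or.inr ⟨rfl, Nat.covBy_iff_add_one_eq.1 (Fin.covBy_iff.1 hxy)⟩)⟩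

theorem gridGraph_adj_of_covBy_snd (c : Fin m₁) {x y : Fin m₂} (hxy : x ⋖ y) :
    (gridGraph m₁ m₂).Adj (c, x) (c, y) :=
  (fromRel_adj _ _ _).2 ⟨fun h => hxy.ne (congrArg Prod.snd h),
    Or.inl (Or.inl ⟨rfl, Nat.covBy_iff_add_one_eq.1 (Fin.covBy_iff.1 hxy)⟩)⟩

theorem setConn_arc (a b : Fin m₁) (r t : Fin m₂) : SetConn (gridGraph m₁ m₂) (arc a b r t) := by
  have hcol : ∀ c, SetConn (gridGraph m₁ m₂) ({c} ×ˢ Set.uIcc r t) := fun c => by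
    rw [Set.singleton_prod]
    exact setConn_image_of_ordConnected (fun _ _ h => gridGraph_adj_of_covBy_snd c h)
      Set.nonempty_uIcc
  have hrow : SetConn (gridGraph m₁ m₂) (Set.uIcc a b ×ˢ {t}) := by
    rw [Set.prod_singleton]
    exact setConn_image_of_ordConnected (fun _ _ h => gridGraph_adj_of_covBy_fst h t)
      Set.nonempty_uIcc
  have harc : arc a b r t = ({a} ×ˢ Set.uIcc r t ∪ Set.uIcc a b ×ˢ {t}) ∪ {b} ×ˢ Set.uIcc r t := by
    rw [arc, Set.insert_eq, Set.union_prod, Set.union_right_comm]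
  rw [harc]
  exact ((hcol a).union hrow ⟨(a, t), ⟨rfl, Set.right_mem_uIcc⟩, Set.left_mem_uIcc, rfl⟩).union
    (hcol b) ⟨(b, t), Or.inr ⟨Set.right_mem_uIcc, rfl⟩, rfl, Set.right_mem_uIcc⟩

theorem linkedFamily_arc {N n : ℕ} {x y : Fin N → Fin m₁} (hxy : IsNested x y) {r : Fin m₂}
    {h : Fin N → Fin m₂} (hmono : StrictMono h) (hr : ∀ i, r < h i) (hn : n ≤ r) :
    LinkedFamily (gridGraph m₁ m₂) n fun i => arc (x i) (y i) r (h i) := by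
  have hU := hxy.pairwise_disjoint_arc
    (fun i _ hij => Set.mem_uIcc_of_le (hr i).le (hmono hij).le) hmono.injective
  refine ⟨fun _ => setConn_arc _ _ _ _, hU, fun l hl I J hI hJ => ?_⟩
  obtain ⟨s, t, hst, hnest⟩ := exists_isNested_matching hxy.injective_left hI hJ
  let depth (k : Fin l) : Fin m₂ := ⟨r - (k + 1), by lia⟩
  have hanti : StrictAnti depth := fun k m hkm => Fin.lt_def.2 (by grind)
  have hdepth : ∀ k, depth k < r := fun k => Fin.lt_def.2 (by grind)
  let D (k : Fin l) := arc (x (s k)) (x (t k)) r (depth k)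
  have hD : Pairwise fun k m => Disjoint (D k) (D m) := hnest.pairwise_disjoint_arc
    (fun k m hkm => Set.mem_uIcc_of_ge (hanti hkm).le (hdepth k).le) hanti.injective
  have hUD : ∀ i k, i ∉ ({s k, t k} : Set (Fin N)) →
      Disjoint (arc (x i) (y i) r (h i)) (D k) := fun i k hik =>
    disjoint_arc_of_opposite (hxy.disjoint_pair_of_notMem hik) (hr i) (hdepth k)
  refine ⟨s, t, _, hst, fun k => ?_, fun k => Set.union_subset_union_left _ Set.subset_union_left,
    pairwise_disjoint_union_union hU hD hnest.pairwise_disjoint_of_comp hUD⟩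
  exact ((setConn_arc _ _ _ _).union (setConn_arc _ _ _ _)
    ⟨(x (s k), r), left_mem_arc, left_mem_arc⟩).union (setConn_arc _ _ _ _)
    ⟨(x (t k), r), Or.inr right_mem_arc, left_mem_arc⟩

theorem exists_linkedFamily_gridGraph {N n : ℕ} {r : Fin m₂} (hn : n ≤ r) (hN : r + N < m₂)
    {S T : Finset (Fin m₁)} (hS : S.card = N) (hT : T.card = N) :
    ∃ U : Fin N → Set (Fin m₁ × Fin m₂), LinkedFamily (gridGraph m₁ m₂) n U ∧
      ∀ i, (∃ x ∈ S, (x, r) ∈ U i) ∧ ∃ y ∈ T, (y, r) ∈ U i := by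
  obtain ⟨x, y, hxy, hnest⟩ := exists_isNested_matching Function.injective_id hS hT
  let height (i : Fin N) : Fin m₂ := ⟨r + (i + 1), by lia⟩
  have hmono : StrictMono height := fun i j hij => Fin.lt_def.2 (by grind)
  have hr : ∀ i, r < height i := fun i => Fin.lt_def.2 (by grind)
  exact ⟨_, linkedFamily_arc hnest hmono hr hn, fun i =>
    ⟨⟨x i, (hxy i).1, left_mem_arc⟩, y i, (hxy i).2, right_mem_arc⟩⟩

end Grid

theorem exists_finset_card_eq_of_le_ncard_range_inter {ι V : Type*} [Finite ι] {w : ι → V}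
    {C : Set V} {N : ℕ} (h : N ≤ (Set.range w ∩ C).ncard) :
    ∃ S : Finset ι, S.card = N ∧ ∀ i ∈ S, w i ∈ C := by
  rw [Set.inter_comm, ← Set.image_preimage_eq_inter_range] at h
  obtain ⟨S, hS, hcard⟩ := Set.exists_subset_card_eq (h.trans (Set.ncard_image_le (Set.toFinite _)))
  obtain ⟨S, rfl⟩ := (Set.toFinite S).exists_finset_coe
  exact ⟨S, by rwa [Set.ncard_coe_finset] at hcard, fun i hi => hS hi⟩

end CGT

theorem statement15_general {V : Type*} {G : SimpleGraph V} {m₁ m₂ K N n : ℕ}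
    (M : CGT.FatModel G (CGT.gridGraph m₁ m₂) K) (hK : 0 < K) {r : Fin m₂}
    (hn : n ≤ r) (hN : r + N < m₂) (hnN : 2 * n ≤ N)
    {w : Fin m₁ → V} (hw : ∀ x, w x ∈ M.branch (x, r))
    {A B : Set V} (hAB : A ∪ B = Set.univ) (hsep : ∀ a ∈ A \ B, ∀ b ∈ B \ A, ¬ G.Adj a b)
    (hA : N ≤ (Set.range w ∩ A).ncard) (hB : N ≤ (Set.range w ∩ B).ncard) :
    ∃ W' ⊆ A ∩ B, W'.ncard = N ∧ CGT.FatPathConn G K n W' := by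
  obtain ⟨S, hS, hSA⟩ := CGT.exists_finset_card_eq_of_le_ncard_range_inter hA
  obtain ⟨T, hT, hTB⟩ := CGT.exists_finset_card_eq_of_le_ncard_range_inter hB
  obtain ⟨U, hU, hST⟩ := CGT.exists_linkedFamily_gridGraph hn hN hS hT
  have hmeet : ∀ i, (M.carrier (U i) ∩ (A ∩ B)).Nonempty := by
    intro i
    obtain ⟨⟨x, hxS, hxU⟩, y, hyT, hyU⟩ := hST i
    exact (CGT.FatModel.setConn_carrier (hU.connected i)).inter_separator_nonempty hAB hsep
      (CGT.FatModel.branch_subset_carrier hxU (hw x)) (hSA x hxS)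
      (CGT.FatModel.branch_subset_carrier hyU (hw y)) (hTB y hyT)
  choose p hpU hpAB using hmeet
  have hinj := CGT.injective_of_pairwise_le_edist hK (hU.pairwise_le_edist hpU)
  refine ⟨Set.range p, Set.range_subset_iff.2 hpAB, ?_, hU.fatPathConn_range hpU hK (by simpa)⟩
  rw [Set.ncard_range_of_injective hinj, Nat.card_fin]

/-- given a 3-fat model of the `(154 × 154)`-grid in `G`, a set `W`
consisting of one vertex from each branch set of the 77th row, and a separation `{A, B}`
of `G` with `|W ∩ A| ≥ 32` and `|W ∩ B| ≥ 32`, the separator `A ∩ B` contains a set of 32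
vertices that is 3-fat 16-path-connected in `G`. -/
theorem statement15 {V : Type*} (G : SimpleGraph V)
    (Mo : CGT.FatModel G (CGT.gridGraph 154 154) 3)
    (w : Fin 154 → V) (hw : ∀ x : Fin 154, w x ∈ Mo.branch (x, (⟨76, by norm_num⟩ : Fin 154)))
    (W : Set V) (hW : W = Set.range w)
    (A B : Set V) (hAB : A ∪ B = Set.univ)
    (hsep : ∀ a ∈ A \ B, ∀ b ∈ B \ A, ¬ G.Adj a b)
    (hA : 32 ≤ (W ∩ A).ncard) (hB : 32 ≤ (W ∩ B).ncard) :
    ∃ W' ⊆ A ∩ B, W'.ncard = 32 ∧ CGT.FatPathConn G 3 16 W' := by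
  subst hW
  exact statement15_general Mo (by norm_num) (by norm_num) (by norm_num) (by norm_num) hw hAB hsep
    hA hB
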